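/- arXiv:2210.07152 — 2 statements merged into one kernel-verified Lean document; each statement's English description precedes it below -/
import Mathlib

section
/- Let C be a compact subset of ℝ^m, ε > 0, and let z_1,...,z_K ∈ C be a maximal 2ε-net in C. Define α_k(x) := max(3ε − ||x − z_k||, 0), ᾱ(x) := Σ_{k=1}^K α_k(x), and β_k(x) := α_k(x)/ᾱ(x) for x ∈ C (note ᾱ(x) ≥ ε > 0 on C). Then: (i) β_k(x) ≥ 0 for all x ∈ C and all k; (ii) Σ_{k=1}^K β_k(x) = 1 for all x ∈ C; (iii) β_k(x) = 0 for all x ∈ C with ||x − z_k|| ≥ 3ε; (iv) for each x ∈ C there are at most 4^m indices k with β_k(x) > 0; and (v) each β_k is Lipschitz on C with Lipschitz constant at most 4^{m+2}/ε. -/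
open Finset

noncomputable section

/-- The tent weight `α_k(x) = [3ε − ‖x − z_k‖]₊` associated with a net point `z_k`. -/
def tentWeight {m K : ℕ} (z : Fin K → EuclideanSpace ℝ (Fin m)) (ε : ℝ) (k : Fin K)
    (x : EuclideanSpace ℝ (Fin m)) : ℝ :=
  max (3 * ε - ‖x - z k‖) 0

/-- The normalized weight `β_k(x) = α_k(x) / ∑_j α_j(x)`. -/
def partitionWeight {m K : ℕ} (z : Fin K → EuclideanSpace ℝ (Fin m)) (ε : ℝ) (k : Fin K)
    (x : EuclideanSpace ℝ (Fin m)) : ℝ :=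
  tentWeight z ε k x / ∑ j, tentWeight z ε j x

open MeasureTheory in
/-- Packing bound. -/
lemma packing_bound (m K : ℕ) (ε : ℝ) (hε : 0 < ε)
    (z : Fin K → EuclideanSpace ℝ (Fin m))
    (hsep : ∀ k j, k ≠ j → 2 * ε ≤ ‖z k - z j‖) (x : EuclideanSpace ℝ (Fin m))
    (s : Finset (Fin K)) (hs : ∀ k ∈ s, ‖x - z k‖ < 3 * ε) : s.card ≤ 4 ^ m := by
  have hdisj : Set.PairwiseDisjoint (s : Set (Fin K)) (fun k => Metric.ball (z k) ε) := by
    intro k _ j _ hkj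
    apply Metric.ball_disjoint_ball
    rw [dist_eq_norm]
    linarith [hsep k j hkj]
  have hsub : (⋃ k ∈ s, Metric.ball (z k) ε) ⊆ Metric.ball x (4 * ε) := by
    intro y hy
    simp only [Set.mem_iUnion] at hy
    obtain ⟨k, hk, hy⟩ := hy
    have h1 := hs k hk
    rw [Metric.mem_ball] at hy ⊢
    have h2 := dist_triangle y (z k) x
    rw [dist_comm (z k) x, dist_eq_norm x] at h2
    linarith
  have hvol := measure_mono (μ := (volume : Measure (EuclideanSpace ℝ (Fin m)))) hsub
  rw [measure_biUnion_finset hdisj (fun k _ => measurableSet_ball)] at hvol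
  simp only [Measure.addHaar_ball_of_pos volume _ hε,
    Measure.addHaar_ball_of_pos volume _ (by positivity : (0 : ℝ) < 4 * ε),
    finrank_euclideanSpace, Fintype.card_fin, Finset.sum_const, nsmul_eq_mul] at hvol
  have hv0 : volume (Metric.ball (0 : EuclideanSpace ℝ (Fin m)) 1) ≠ 0 :=
    (Metric.measure_ball_pos volume _ one_pos).ne'
  have hvt : volume (Metric.ball (0 : EuclideanSpace ℝ (Fin m)) 1) ≠ ⊤ := measure_ball_lt_top.ne
  rw [← mul_assoc, ENNReal.mul_le_mul_iff_left hv0 hvt] at hvol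
  have hcast : ((s.card : ℕ) : ENNReal) = ENNReal.ofReal (s.card : ℝ) := by simp
  rw [hcast, ← ENNReal.ofReal_mul (by positivity),
    ENNReal.ofReal_le_ofReal_iff (by positivity), mul_pow] at hvol
  have h3 : (s.card : ℝ) ≤ 4 ^ m := le_of_mul_le_mul_right hvol (by positivity)
  exact_mod_cast h3

lemma tent_nonneg {m K : ℕ} (z : Fin K → EuclideanSpace ℝ (Fin m)) (ε : ℝ) (k : Fin K)
    (x : EuclideanSpace ℝ (Fin m)) : 0 ≤ tentWeight z ε k x := le_max_right _ _

lemma tent_pos {m K : ℕ} {z : Fin K → EuclideanSpace ℝ (Fin m)} {ε : ℝ} {k : Fin K}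
    {x : EuclideanSpace ℝ (Fin m)} (h : 0 < tentWeight z ε k x) : ‖x - z k‖ < 3 * ε := by
  unfold tentWeight at h
  rcases lt_max_iff.1 h with h | h <;> linarith

lemma tent_lip {m K : ℕ} (z : Fin K → EuclideanSpace ℝ (Fin m)) (ε : ℝ) (k : Fin K)
    (x y : EuclideanSpace ℝ (Fin m)) :
    |tentWeight z ε k x - tentWeight z ε k y| ≤ ‖x - y‖ := by
  unfold tentWeight
  refine (abs_max_sub_max_le_abs _ _ _).trans ?_
  have h := abs_norm_sub_norm_le (y - z k) (x - z k)
  rw [sub_sub_sub_cancel_right, norm_sub_rev y x] at h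
  rwa [sub_sub_sub_cancel_left]

open scoped Classical in
/-- **A Lipschitz partition of unity subordinate to a maximal `2ε`-net.**
Let `C ⊆ ℝ^m` be compact, `ε > 0`, and let `z_1, …, z_K ∈ C` be a maximal `2ε`-net in `C`
(pairwise distances at least `2ε`, and every point of `C` is within distance `< 2ε` of some
`z_k`). With `α_k(x) = [3ε − ‖x − z_k‖]₊`, `ᾱ(x) = ∑_k α_k(x)` and `β_k = α_k/ᾱ`:
(i) `β_k ≥ 0` on `C`; (ii) `∑_k β_k = 1` on `C`; (iii) `β_k(x) = 0` whenever
`‖x − z_k‖ ≥ 3ε`; (iv) for each `x ∈ C` at most `4^m` of the `β_k(x)` are positive;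
(v) each `β_k` is Lipschitz on `C` with constant at most `4^(m+2)/ε`. -/
theorem lipschitz_partition_of_unity
    (m K : ℕ) (ε : ℝ) (hε : 0 < ε)
    (C : Set (EuclideanSpace ℝ (Fin m))) (hC : IsCompact C)
    (z : Fin K → EuclideanSpace ℝ (Fin m)) (hzC : ∀ k, z k ∈ C)
    (hsep : ∀ k j, k ≠ j → 2 * ε ≤ ‖z k - z j‖)
    (hmax : ∀ x ∈ C, ∃ k, ‖x - z k‖ < 2 * ε) :
    (∀ x ∈ C, ∀ k, 0 ≤ partitionWeight z ε k x) ∧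
    (∀ x ∈ C, ∑ k, partitionWeight z ε k x = 1) ∧
    (∀ x ∈ C, ∀ k, 3 * ε ≤ ‖x - z k‖ → partitionWeight z ε k x = 0) ∧
    (∀ x ∈ C, (Finset.univ.filter fun k => 0 < partitionWeight z ε k x).card ≤ 4 ^ m) ∧
    (∀ k, ∀ x ∈ C, ∀ y ∈ C,
      |partitionWeight z ε k x - partitionWeight z ε k y| ≤ 4 ^ (m + 2) / ε * ‖x - y‖) := by
  have hsum : ∀ x ∈ C, ε ≤ ∑ j, tentWeight z ε j x := by
    intro x hx
    obtain ⟨k, hk⟩ := hmax x hx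
    have h1 : tentWeight z ε k x ≤ ∑ j, tentWeight z ε j x :=
      Finset.single_le_sum (fun j _ => tent_nonneg z ε j x) (Finset.mem_univ k)
    have h2 : 3 * ε - ‖x - z k‖ ≤ tentWeight z ε k x := le_max_left _ _
    linarith
  have hcard : ∀ x, (Finset.univ.filter fun k => 0 < tentWeight z ε k x).card ≤ 4 ^ m := by
    intro x
    apply packing_bound m K ε hε z hsep x
    intro k hk
    exact tent_pos (Finset.mem_filter.1 hk).2
  refine ⟨?_, ?_, ?_, ?_, ?_⟩
  · intro x hx k
    exact div_nonneg (tent_nonneg _ _ _ _) (hε.le.trans (hsum x hx))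
  · intro x hx
    unfold partitionWeight
    rw [← Finset.sum_div]
    exact div_self (hε.trans_le (hsum x hx)).ne'
  · intro x hx k hk
    unfold partitionWeight tentWeight
    rw [max_eq_right (by linarith), zero_div]
  · intro x hx
    refine (Finset.card_le_card ?_).trans (hcard x)
    intro k hk
    rw [Finset.mem_filter] at hk ⊢
    refine ⟨hk.1, ?_⟩
    by_contra h
    have h0 : tentWeight z ε k x = 0 := le_antisymm (not_lt.1 h) (tent_nonneg _ _ _ _)
    have h1 := hk.2
    unfold partitionWeight at h1
    rw [h0, zero_div] at h1
    exact lt_irrefl _ h1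
  · intro k x hx y hy
    have hX := hsum x hx
    have hY := hsum y hy
    have hXY : |(∑ j, tentWeight z ε j y) - ∑ j, tentWeight z ε j x|
        ≤ 2 * 4 ^ m * ‖x - y‖ := by
      rw [← Finset.sum_sub_distrib]
      refine (Finset.abs_sum_le_sum_abs _ _).trans ?_
      set S := (Finset.univ.filter fun k => 0 < tentWeight z ε k x) ∪
        (Finset.univ.filter fun k => 0 < tentWeight z ε k y) with hS
      have hSc : (S.card : ℝ) ≤ 2 * 4 ^ m := by
        have h := (Finset.card_union_le _ _).trans (add_le_add (hcard x) (hcard y))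
        rw [← hS] at h
        have h' : S.card ≤ 2 * 4 ^ m := by omega
        exact_mod_cast h'
      rw [← Finset.sum_subset (Finset.subset_univ S)]
      · calc ∑ j ∈ S, |tentWeight z ε j y - tentWeight z ε j x|
            ≤ ∑ j ∈ S, ‖x - y‖ := Finset.sum_le_sum fun j _ => by
              rw [norm_sub_rev]; exact tent_lip z ε j y x
          _ = S.card * ‖x - y‖ := by rw [Finset.sum_const, nsmul_eq_mul]
          _ ≤ _ := by gcongr
      · intro j _ hj
        rw [hS, Finset.mem_union, not_or, Finset.mem_filter, Finset.mem_filter] at hj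
        have h1 : tentWeight z ε j x = 0 :=
          le_antisymm (not_lt.1 fun h => hj.1 ⟨Finset.mem_univ _, h⟩) (tent_nonneg _ _ _ _)
        have h2 : tentWeight z ε j y = 0 :=
          le_antisymm (not_lt.1 fun h => hj.2 ⟨Finset.mem_univ _, h⟩) (tent_nonneg _ _ _ _)
        rw [h1, h2]; simp
    have hle : tentWeight z ε k y ≤ ∑ j, tentWeight z ε j y :=
      Finset.single_le_sum (fun j _ => tent_nonneg z ε j y) (Finset.mem_univ k)
    have hl := tent_lip z ε k x y
    have ha := tent_nonneg z ε k y
    unfold partitionWeight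
    set A := ∑ j, tentWeight z ε j x
    set B := ∑ j, tentWeight z ε j y
    set a := tentWeight z ε k x
    set b := tentWeight z ε k y
    have hA : 0 < A := hε.trans_le hX
    have hB : 0 < B := hε.trans_le hY
    have key : a / A - b / B = ((a - b) + b / B * (B - A)) / A := by
      field_simp
      ring
    have hbB : b / B ≤ 1 := (div_le_one hB).2 hle
    have hbB0 : 0 ≤ b / B := div_nonneg ha hB.le
    have h4 : (1 : ℝ) ≤ 4 ^ m := one_le_pow₀ (by norm_num)
    have hnum : |(a - b) + b / B * (B - A)| ≤ 4 ^ (m + 2) * ‖x - y‖ := by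
      refine (abs_add_le _ _).trans ?_
      rw [abs_mul, abs_of_nonneg hbB0]
      have h5 : b / B * |B - A| ≤ 1 * |B - A| := by gcongr
      have h6 : 1 * ‖x - y‖ ≤ 4 ^ m * ‖x - y‖ := by gcongr
      have h7 : 0 ≤ 4 ^ m * ‖x - y‖ := by positivity
      rw [pow_add]
      nlinarith
    rw [key, abs_div, abs_of_pos hA, div_mul_eq_mul_div (4 ^ (m + 2)) ε]
    exact div_le_div₀ (by positivity) hnum hε hX
end
end

section
/- Let C ⊆ ℝ^m be compact, L ≥ 1, and let W_L be the set of functions w : C → [0,1] with Lipschitz constant at most L. Then for every ε > 0 there exist finitely many functions f_1,...,f_d ∈ W_L such that for every w ∈ W_L there is a vector ϖ ∈ [0,1]^d with max_{x∈C} |w(x) − Σ_{i=1}^d ϖ_i f_i(x)| < ε; moreover, one can take d ≤ c · L^m/ε^{m+1} for a constant c depending only on the dimension m and the diameter of C. -/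
open Finset

/-- Clamp to `[0,1]`. -/
noncomputable def lbClamp (t : ℝ) : ℝ := max 0 (min 1 t)

/-- The hat function, as a difference of clamps. -/
noncomputable def lbHat (t : ℝ) : ℝ := lbClamp (t + 1) - lbClamp t

lemma lbHat_mem (t : ℝ) : 0 ≤ lbHat t ∧ lbHat t ≤ 1 := by
  unfold lbHat lbClamp
  constructor <;> grind

lemma lbHat_zero (t : ℝ) (h : 1 ≤ |t|) : lbHat t = 0 := by
  unfold lbHat lbClamp
  rcases le_abs.1 h with h | h <;> grind

lemma lbClamp_lip (s t : ℝ) : |lbClamp s - lbClamp t| ≤ |s - t| := by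
  unfold lbClamp
  grind

lemma lbHat_lip (s t : ℝ) : |lbHat s - lbHat t| ≤ 2 * |s - t| := by
  have h1 := lbClamp_lip s t
  have h2 := lbClamp_lip (s + 1) (t + 1)
  rw [add_sub_add_right_eq_sub] at h2
  unfold lbHat
  have : lbClamp (s + 1) - lbClamp s - (lbClamp (t + 1) - lbClamp t)
    = (lbClamp (s + 1) - lbClamp (t + 1)) - (lbClamp s - lbClamp t) := by ring
  rw [this]
  have := abs_sub (lbClamp (s + 1) - lbClamp (t + 1)) (lbClamp s - lbClamp t)
  linarith

lemma lbHat_sum (N : ℕ) (t : ℝ) (h0 : 0 ≤ t) (hN : t ≤ N) :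
    ∑ k : Fin (N + 1), lbHat (t - (k : ℕ)) = 1 := by
  have key : ∀ n : ℕ, ∑ k ∈ range n, lbHat (t - (k : ℕ)) = lbClamp (t + 1) - lbClamp (t + 1 - n) := by
    intro n
    induction n with
    | zero => simp
    | succ n ih =>
      rw [sum_range_succ, ih, lbHat]
      push_cast
      rw [show t + 1 - ((n : ℝ) + 1) = t - n by ring, show t - (n : ℝ) + 1 = t + 1 - n by ring]
      ring
  rw [Fin.sum_univ_eq_sum_range (fun k => lbHat (t - (k : ℕ))) (N + 1), key]
  push_cast
  unfold lbClamp
  grind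

lemma lb_prod_lip {ι : Type*} (s : Finset ι) (a b : ι → ℝ)
    (ha : ∀ i, 0 ≤ a i ∧ a i ≤ 1) (hb : ∀ i, 0 ≤ b i ∧ b i ≤ 1) :
    |∏ i ∈ s, a i - ∏ i ∈ s, b i| ≤ ∑ i ∈ s, |a i - b i| := by
  classical
  induction s using Finset.induction_on with
  | empty => simp
  | insert j s hj ih =>
    rw [prod_insert hj, prod_insert hj, sum_insert hj]
    have h1 : 0 ≤ ∏ i ∈ s, a i := prod_nonneg fun i _ => (ha i).1
    have h2 : ∏ i ∈ s, a i ≤ 1 := prod_le_one (fun i _ => (ha i).1) fun i _ => (ha i).2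
    set A := ∏ i ∈ s, a i
    set B := ∏ i ∈ s, b i
    have e : a j * A - b j * B = (a j - b j) * A + b j * (A - B) := by ring
    rw [e]
    refine (abs_add_le _ _).trans ?_
    rw [abs_mul, abs_mul, abs_of_nonneg h1, abs_of_nonneg (hb j).1]
    have := mul_le_mul_of_nonneg_left h2 (abs_nonneg (a j - b j))
    have := mul_le_mul_of_nonneg_right (hb j).2 (abs_nonneg (A - B))
    linarith

/-- Tensor-product hat functions on a grid. -/
noncomputable def lbPhi {m N : ℕ} (a : EuclideanSpace ℝ (Fin m)) (δ : ℝ)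
    (k : Fin m → Fin (N + 1)) (x : EuclideanSpace ℝ (Fin m)) : ℝ :=
  ∏ i, lbHat ((x i - a i) / δ - (k i : ℕ))

lemma lb_coord {m : ℕ} (x : EuclideanSpace ℝ (Fin m)) (i : Fin m) : |x i| ≤ ‖x‖ := by
  simpa using PiLp.norm_apply_le x i

lemma lb_norm_le {m : ℕ} (x : EuclideanSpace ℝ (Fin m)) (r : ℝ) (h : ∀ i, |x i| ≤ r)
    (hr : 0 ≤ r) : ‖x‖ ≤ m * r := by
  rw [EuclideanSpace.norm_eq]
  apply Real.sqrt_le_iff.2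
  refine ⟨by positivity, ?_⟩
  calc ∑ i, ‖x i‖ ^ 2 ≤ ∑ i : Fin m, r ^ 2 := by
        refine sum_le_sum fun i _ => ?_
        rw [Real.norm_eq_abs]
        exact pow_le_pow_left₀ (abs_nonneg _) (h i) 2
    _ = m * r ^ 2 := by simp
    _ ≤ (m * r) ^ 2 := by
        rw [mul_pow]
        refine mul_le_mul_of_nonneg_right ?_ (sq_nonneg r)
        exact_mod_cast Nat.le_self_pow (by norm_num) m

lemma lbPhi_mem {m N : ℕ} (a : EuclideanSpace ℝ (Fin m)) (δ : ℝ)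
    (k : Fin m → Fin (N + 1)) (x : EuclideanSpace ℝ (Fin m)) :
    0 ≤ lbPhi a δ k x ∧ lbPhi a δ k x ≤ 1 :=
  ⟨prod_nonneg fun _ _ => (lbHat_mem _).1,
    prod_le_one (fun _ _ => (lbHat_mem _).1) fun _ _ => (lbHat_mem _).2⟩

lemma lbPhi_lip {m N : ℕ} (a : EuclideanSpace ℝ (Fin m)) (δ : ℝ) (hδ : 0 < δ)
    (k : Fin m → Fin (N + 1)) (x y : EuclideanSpace ℝ (Fin m)) :
    |lbPhi a δ k x - lbPhi a δ k y| ≤ 2 * m / δ * ‖x - y‖ := by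
  refine (lb_prod_lip univ _ _ (fun i => lbHat_mem _) (fun i => lbHat_mem _)).trans ?_
  calc _ ≤ ∑ i : Fin m, 2 / δ * ‖x - y‖ := by
        refine sum_le_sum fun i _ => (lbHat_lip _ _).trans ?_
        have h := lb_coord (x - y) i
        have e : (x i - a i) / δ - ((k i : ℕ) : ℝ) - ((y i - a i) / δ - ((k i : ℕ) : ℝ))
          = (x - y) i / δ := by
          simp only [PiLp.sub_apply]; ring
        rw [e, abs_div, abs_of_pos hδ]
        calc 2 * (|(x - y) i| / δ) = 2 / δ * |(x - y) i| := by ring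
          _ ≤ _ := by gcongr
    _ = _ := by simp; ring

lemma lbPhi_sum {m N : ℕ} (a : EuclideanSpace ℝ (Fin m)) (δ : ℝ)
    (x : EuclideanSpace ℝ (Fin m)) (h0 : ∀ i, 0 ≤ (x i - a i) / δ)
    (h1 : ∀ i, (x i - a i) / δ ≤ N) :
    ∑ k : Fin m → Fin (N + 1), lbPhi a δ k x = 1 := by
  have := (Finset.prod_univ_sum (fun _ : Fin m => (univ : Finset (Fin (N + 1))))
    (fun i j => lbHat ((x i - a i) / δ - (j : ℕ)))).symm
  rw [Fintype.piFinset_univ] at this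
  unfold lbPhi
  rw [this]
  exact prod_eq_one fun i _ => lbHat_sum N _ (h0 i) (h1 i)

lemma lbPhi_near {m N : ℕ} (a : EuclideanSpace ℝ (Fin m)) (δ : ℝ) (hδ : 0 < δ)
    (k : Fin m → Fin (N + 1)) (x y : EuclideanSpace ℝ (Fin m))
    (hx : lbPhi a δ k x ≠ 0) (hy : lbPhi a δ k y ≠ 0) : ‖x - y‖ ≤ m * (2 * δ) := by
  refine lb_norm_le _ _ (fun i => ?_) (by positivity)
  have h1 : |(x i - a i) / δ - (k i : ℕ)| < 1 := by
    by_contra! h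
    exact hx (prod_eq_zero (mem_univ i) (lbHat_zero _ h))
  have h2 : |(y i - a i) / δ - (k i : ℕ)| < 1 := by
    by_contra! h
    exact hy (prod_eq_zero (mem_univ i) (lbHat_zero _ h))
  have h3 : |(x - y) i / δ| ≤ 2 := by
    have e : (x - y) i / δ = ((x i - a i) / δ - ((k i : ℕ) : ℝ))
        - ((y i - a i) / δ - ((k i : ℕ) : ℝ)) := by
      simp only [PiLp.sub_apply]; ring
    rw [e]
    exact (abs_sub _ _).trans (by linarith)
  rwa [abs_div, abs_of_pos hδ, div_le_iff₀ hδ] at h3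

/-- **A finite approximate basis for bounded Lipschitz functions.**
Let `C ⊆ ℝ^m` be compact with diameter at most `α`, and for `L ≥ 1` let `W_L` be the set
of functions `w : C → [0,1]` with Lipschitz constant at most `L`. There is a constant
`κ > 0`, depending only on the dimension `m` and on `α`, such that for every `ε > 0`
there exist `d ≤ κ L^m / ε^(m+1)` functions `f_1, …, f_d ∈ W_L` such that every `w ∈ W_L`
admits coefficients `ϖ ∈ [0,1]^d` with `max_{x ∈ C} |w(x) − ∑ i, ϖ_i f_i(x)| < ε`. -/
theorem lipschitz_basis
    (m : ℕ) (hm : 1 ≤ m) (α : ℝ) :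
    ∃ κ : ℝ, 0 < κ ∧
      ∀ C : Set (EuclideanSpace ℝ (Fin m)), IsCompact C → Metric.diam C ≤ α →
      ∀ L : ℝ, 1 ≤ L → ∀ ε : ℝ, 0 < ε →
        ∃ d : ℕ, (d : ℝ) ≤ κ * L ^ m / ε ^ (m + 1) ∧
          ∃ f : Fin d → EuclideanSpace ℝ (Fin m) → ℝ,
            (∀ i, (∀ x ∈ C, f i x ∈ Set.Icc (0 : ℝ) 1) ∧
              ∀ x ∈ C, ∀ y ∈ C, |f i x - f i y| ≤ L * ‖x - y‖) ∧
            ∀ w : EuclideanSpace ℝ (Fin m) → ℝ,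
              (∀ x ∈ C, w x ∈ Set.Icc (0 : ℝ) 1) →
              (∀ x ∈ C, ∀ y ∈ C, |w x - w y| ≤ L * ‖x - y‖) →
              ∃ ϖ : Fin d → ℝ, (∀ i, ϖ i ∈ Set.Icc (0 : ℝ) 1) ∧
                ∀ x ∈ C, |w x - ∑ i, ϖ i * f i x| < ε := by
  have hm' : (1 : ℝ) ≤ m := by exact_mod_cast hm
  have hm0 : (0 : ℝ) < m := by linarith
  refine ⟨(8 * m ^ 2 + 1) * (8 * m * |α| + 2) ^ m, by positivity, ?_⟩
  intro C hC hα L hL ε hε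
  have hL0 : 0 < L := by linarith
  by_cases hε1 : 1 < ε
  · refine ⟨0, by simp only [Nat.cast_zero]; positivity, fun i => i.elim0, fun i => i.elim0, ?_⟩
    intro w hw _
    refine ⟨fun i => i.elim0, fun i => i.elim0, fun x hx => ?_⟩
    have := hw x hx
    simp only [univ_eq_empty, sum_empty, sub_zero]
    rw [abs_of_nonneg this.1]
    linarith [this.2]
  rw [not_lt] at hε1
  rcases C.eq_empty_or_nonempty with rfl | ⟨x0, hx0⟩
  · refine ⟨0, by simp only [Nat.cast_zero]; positivity, fun i => i.elim0, fun i => i.elim0, ?_⟩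
    intro w hw _
    exact ⟨fun i => i.elim0, fun i => i.elim0, fun x hx => hx.elim⟩
  have hα0 : 0 ≤ α := Metric.diam_nonneg.trans hα
  rw [abs_of_nonneg hα0]
  obtain ⟨δ, hδe⟩ : ∃ δ : ℝ, δ = ε / (4 * m * L) := ⟨_, rfl⟩
  have hδ : 0 < δ := by rw [hδe]; positivity
  obtain ⟨N, hNe⟩ : ∃ N : ℕ, N = ⌈2 * α / δ⌉₊ := ⟨_, rfl⟩
  obtain ⟨M, hMe⟩ : ∃ M : ℕ, M = ⌈8 * (m : ℝ) ^ 2 / ε⌉₊ := ⟨_, rfl⟩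
  have hN1 : 2 * α / δ ≤ N := hNe ▸ Nat.le_ceil _
  have hM1 : 8 * (m : ℝ) ^ 2 / ε ≤ M := hMe ▸ Nat.le_ceil _
  have hM0 : (0 : ℝ) < M := lt_of_lt_of_le (by positivity) hM1
  have hN2 : (N : ℝ) + 1 ≤ (8 * m * α + 2) * (L / ε) := by
    have h := Nat.ceil_lt_add_one (a := 2 * α / δ) (by positivity)
    rw [← hNe] at h
    have e : 2 * α / δ = 8 * m * α * (L / ε) := by rw [hδe]; field_simp; ring
    have : 1 ≤ L / ε := by rw [le_div_iff₀ hε]; linarith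
    rw [e] at h
    nlinarith
  have hM2 : (M : ℝ) ≤ (8 * m ^ 2 + 1) / ε := by
    have h := Nat.ceil_lt_add_one (a := 8 * (m : ℝ) ^ 2 / ε) (by positivity)
    rw [← hMe] at h
    have : 1 ≤ 1 / ε := by rw [le_div_iff₀ hε]; linarith
    rw [add_div]; linarith
  obtain ⟨a, ha⟩ : ∃ a : EuclideanSpace ℝ (Fin m), ∀ i, a i = x0 i - α :=
    ⟨WithLp.toLp 2 fun i => x0 i - α, fun i => rfl⟩
  have hdiff : ∀ x ∈ C, ∀ i, |x i - x0 i| ≤ α := by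
    intro x hx i
    have h1 := Metric.dist_le_diam_of_mem hC.isBounded hx hx0
    rw [dist_eq_norm] at h1
    have h2 := lb_coord (x - x0) i
    rw [PiLp.sub_apply] at h2
    linarith
  have hsum : ∀ x ∈ C, ∑ k : Fin m → Fin (N + 1), lbPhi a δ k x = 1 := by
    intro x hx
    apply lbPhi_sum
    · intro i
      have := abs_le.1 (hdiff x hx i)
      rw [ha]
      apply div_nonneg _ hδ.le
      linarith
    · intro i
      have := abs_le.1 (hdiff x hx i)
      refine le_trans ?_ hN1
      rw [ha]
      gcongr
      linarith
  let ι := Fin M × (Fin m → Fin (N + 1))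
  let e : ι ≃ Fin (Fintype.card ι) := Fintype.equivFin ι
  refine ⟨Fintype.card ι, ?_, fun j x => ε / (8 * m ^ 2) * lbPhi a δ (e.symm j).2 x, ?_, ?_⟩
  · have : (Fintype.card ι : ℝ) = M * ((N : ℝ) + 1) ^ m := by
      simp [ι]
    rw [this]
    calc (M : ℝ) * ((N : ℝ) + 1) ^ m
        ≤ (8 * m ^ 2 + 1) / ε * ((8 * m * α + 2) * (L / ε)) ^ m := by gcongr
      _ = _ := by
        rw [mul_pow, div_pow]
        field_simp
        ring
  · intro j
    have hc : ε / (8 * (m : ℝ) ^ 2) ≤ 1 := by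
      rw [div_le_one (by positivity)]
      nlinarith
    refine ⟨fun x _ => ?_, fun x _ y _ => ?_⟩
    · have := lbPhi_mem a δ (e.symm j).2 x
      exact ⟨mul_nonneg (by positivity) this.1, mul_le_one₀ hc this.1 this.2⟩
    · dsimp only
      rw [← mul_sub, abs_mul, abs_of_pos (by positivity : 0 < ε / (8 * (m : ℝ) ^ 2))]
      refine (mul_le_mul_of_nonneg_left (lbPhi_lip a δ hδ (e.symm j).2 x y)
        (by positivity)).trans (le_of_eq ?_)
      rw [hδe]
      field_simp
      ring
  · intro w hw hwL
    have hv : ∀ k : Fin m → Fin (N + 1), ∃ v : ℝ, v ∈ Set.Icc (0 : ℝ) 1 ∧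
        ∀ x ∈ C, lbPhi a δ k x ≠ 0 → |w x - v| ≤ ε / 2 := by
      intro k
      by_cases h : ∃ y ∈ C, lbPhi a δ k y ≠ 0
      · obtain ⟨y, hy, hy0⟩ := h
        refine ⟨w y, hw y hy, fun x hx hx0 => (hwL x hx y hy).trans ?_⟩
        refine (mul_le_mul_of_nonneg_left (lbPhi_near a δ hδ k x y hx0 hy0) hL0.le).trans
          (le_of_eq ?_)
        rw [hδe]
        field_simp
        ring
      · push Not at h
        exact ⟨0, by simp, fun x hx hx0 => (hx0 (h x hx)).elim⟩
    choose v hv1 hv2 using hv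
    refine ⟨fun j => v (e.symm j).2 * (8 * m ^ 2 / ε / M), fun j => ?_, fun x hx => ?_⟩
    · have h := hv1 (e.symm j).2
      have h2 : 8 * (m : ℝ) ^ 2 / ε / M ≤ 1 := (div_le_one hM0).2 hM1
      exact ⟨mul_nonneg h.1 (by positivity), mul_le_one₀ h.2 (by positivity) h2⟩
    · have hs : ∑ j, v (e.symm j).2 * (8 * m ^ 2 / ε / M) *
          (ε / (8 * m ^ 2) * lbPhi a δ (e.symm j).2 x) = ∑ k, v k * lbPhi a δ k x := by
        rw [Equiv.sum_comp e.symm (fun p : ι => v p.2 * (8 * m ^ 2 / ε / M) *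
          (ε / (8 * m ^ 2) * lbPhi a δ p.2 x)), Fintype.sum_prod_type]
        simp only [sum_const, card_univ, Fintype.card_fin, nsmul_eq_mul]
        rw [mul_sum]
        refine sum_congr rfl fun k _ => ?_
        field_simp
      rw [hs]
      have h1 : w x - ∑ k, v k * lbPhi a δ k x = ∑ k, (w x - v k) * lbPhi a δ k x := by
        simp only [sub_mul, sum_sub_distrib]
        rw [← mul_sum, hsum x hx, mul_one]
      rw [h1]
      calc _ ≤ ∑ k, |(w x - v k) * lbPhi a δ k x| := abs_sum_le_sum_abs _ _
        _ ≤ ∑ k, ε / 2 * lbPhi a δ k x := by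
          refine sum_le_sum fun k _ => ?_
          rw [abs_mul, abs_of_nonneg (lbPhi_mem a δ k x).1]
          by_cases h0 : lbPhi a δ k x = 0
          · simp [h0]
          · exact mul_le_mul_of_nonneg_right (hv2 k x hx h0) (lbPhi_mem a δ k x).1
        _ = ε / 2 := by rw [← mul_sum, hsum x hx, mul_one]
        _ < ε := by linarith
end
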